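/- Let μ be a probability measure on ℝ with μ((−∞,0]) = 0, with Polya kernel k_μ(r) = ∫₀^∞ max{0, 1 − |r|/x} dμ(x). Fix real numbers x₁, …, xₙ and set K_{ij} = k_μ(x_i − x_j). Let (w_l, b_l), l = 1, …, D, be independent random pairs whose common joint law is: w has law μ and, conditionally on w, b is uniform on (0, w) (i.e., the joint law assigns to a set A the value ∫₀^∞ (1/w) ∫₀^w 1_A(w, b) db dμ(w)). For each l let K̃^{(l)} be the n×n matrix with entries K̃^{(l)}_{ij} = 1 if ⌊(x_i − b_l)/w_l⌋ = ⌊(x_j − b_l)/w_l⌋ and 0 otherwise. Then for each pair (i, j), K̃^{(1)}_{ij} is a Bernoulli random variable with success probability K_{ij}; E[(1/D) Σ_{l=1}^D K̃^{(l)}_{ij}] = K_{ij} for all i, j; and E[Σ_{i,j=1}^n ((1/D) Σ_{l=1}^D K̃^{(l)}_{ij} − K_{ij})²] = (1/D)(Σ_{i,j=1}^n K_{ij} − Σ_{i,j=1}^n K_{ij}²). -/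

import Mathlib

open MeasureTheory ProbabilityTheory

/-!
For a fixed spacing `w`, the offsets `b` for which two points share a bin form a `w`-periodic set.
Its share of a period can therefore be read off the period ending at the larger point, where the
set is a single interval of length `w - |y - z|` (empty if this is negative). Averaging over `w`
gives the Polya kernel. The entries of the binning matrices are thus idempotent random variables of
mean `K i j`, hence of variance `K i j - K i j ^ 2`, and averaging `D` pairwise independent copies
divides this variance by `D`.
-/

section Moments

variable {Ω κ : Type*} [MeasurableSpace Ω] {P : Measure Ω}

lemma memLp_of_isIdempotentElem [IsFiniteMeasure P] {X : Ω → ℝ} (hX : AEStronglyMeasurable X P)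
    (hidem : IsIdempotentElem X) (p : ENNReal) : MemLp X p P := by
  refine MemLp.of_bound hX 1 (.of_forall fun ω => ?_)
  rcases IsIdempotentElem.iff_eq_zero_or_one.1 (congrFun hidem ω) with h | h <;> simp [h]

lemma variance_of_isIdempotentElem [IsProbabilityMeasure P] {X : Ω → ℝ}
    (hX : AEStronglyMeasurable X P) (hidem : IsIdempotentElem X) : Var[X; P] = P[X] - P[X] ^ 2 := by
  rw [variance_eq_sub (memLp_of_isIdempotentElem hX hidem 2), pow_two X, hidem.eq]

variable [Fintype κ] [Nonempty κ] {X : κ → Ω → ℝ} {m v : ℝ}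

lemma integral_sampleMean (hX : ∀ l, Integrable (X l) P) (hm : ∀ l, P[X l] = m) :
    ∫ ω, (Fintype.card κ : ℝ)⁻¹ * ∑ l, X l ω ∂P = m := by
  rw [integral_const_mul, integral_finsetSum _ fun l _ => hX l]
  simp [hm]

lemma variance_sampleMean (hX : ∀ l, MemLp (X l) 2 P)
    (hindep : Pairwise fun l l' => X l ⟂ᵢ[P] X l') (hv : ∀ l, Var[X l; P] = v) :
    Var[fun ω => (Fintype.card κ : ℝ)⁻¹ * ∑ l, X l ω; P] = (Fintype.card κ : ℝ)⁻¹ * v := by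
  have hsum : Var[fun ω => ∑ l, X l ω; P] = Fintype.card κ * v := by
    simp_rw [← Finset.sum_apply _ Finset.univ X]
    rw [IndepFun.variance_sum (fun l _ => hX l) fun l _ l' _ hl => hindep hl]
    simp [hv]
  rw [variance_const_mul, hsum]
  field_simp

lemma integral_sq_sampleMean_sub [IsFiniteMeasure P] (hX : ∀ l, MemLp (X l) 2 P)
    (hindep : Pairwise fun l l' => X l ⟂ᵢ[P] X l') (hm : ∀ l, P[X l] = m)
    (hv : ∀ l, Var[X l; P] = v) :
    ∫ ω, ((Fintype.card κ : ℝ)⁻¹ * ∑ l, X l ω - m) ^ 2 ∂P = (Fintype.card κ : ℝ)⁻¹ * v := by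
  have hmean := integral_sampleMean (fun l => (hX l).integrable one_le_two) hm
  have hmeas : AEMeasurable (fun ω => (Fintype.card κ : ℝ)⁻¹ * ∑ l, X l ω) P :=
    ((memLp_finsetSum _ fun l _ => hX l).const_mul _).aemeasurable
  rw [← variance_sampleMean hX hindep hv, variance_eq_integral hmeas, hmean]

end Moments

lemma measure_inter_Ioc_eq_of_periodic {ν : Measure ℝ} [ν.IsAddLeftInvariant] {S : Set ℝ} {w : ℝ}
    (hw : 0 < w) (hS : MeasurableSet S) (hper : Function.Periodic (· ∈ S) w) (a c : ℝ) :
    ν (S ∩ Set.Ioc a (a + w)) = ν (S ∩ Set.Ioc c (c + w)) := by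
  refine (isAddFundamentalDomain_Ioc hw a ν).measure_set_eq
    (isAddFundamentalDomain_Ioc hw c ν) hS ?_
  rintro ⟨g, hg⟩
  ext b
  exact (hper.map_vadd_zmultiples ⟨g, hg⟩ b).to_iff

section Bins

/-- The index of the bin containing `y` in the grid `g = (w, b)` of spacing `w` and offset `b`. -/
noncomputable def binIndex (g : ℝ × ℝ) (y : ℝ) : ℤ :=
  ⌊(y - g.2) / g.1⌋

lemma measurable_binIndex (y : ℝ) : Measurable fun g => binIndex g y :=
  Int.measurable_floor.comp ((measurable_const.sub measurable_snd).div measurable_fst)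

lemma measurableSet_binIndex_eq (y z : ℝ) : MeasurableSet {g | binIndex g y = binIndex g z} :=
  measurableSet_eq_fun (measurable_binIndex y) (measurable_binIndex z)

variable {w : ℝ}

lemma binIndex_offset_add_spacing (hw : w ≠ 0) (b y : ℝ) :
    binIndex (w, b + w) y = binIndex (w, b) y - 1 := by
  rw [binIndex, binIndex, ← Int.floor_sub_one]
  congr 1
  field_simp
  ring

lemma binIndex_eq_zero_iff (hw : 0 < w) {b y : ℝ} :
    binIndex (w, b) y = 0 ↔ b ∈ Set.Ioc (y - w) y := by
  rw [binIndex, Int.floor_eq_zero_iff, Set.mem_Ico, Set.mem_Ioc, le_div_iff₀ hw, div_lt_one hw,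
    zero_mul, sub_nonneg, sub_lt_comm, and_comm]

lemma periodic_binIndex_eq (hw : w ≠ 0) (y z : ℝ) :
    Function.Periodic (· ∈ {b | binIndex (w, b) y = binIndex (w, b) z}) w := fun b => by
  simp only [Set.mem_ofPred_eq, binIndex_offset_add_spacing hw, sub_left_inj]

lemma setOf_binIndex_eq_inter_Ioc (hw : 0 < w) {y z : ℝ} (hyz : y ≤ z) :
    {b | binIndex (w, b) y = binIndex (w, b) z} ∩ Set.Ioc (z - w) z = Set.Ioc (z - w) y := by
  ext b
  constructor
  · rintro ⟨hb, hbz⟩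
    have hby : binIndex (w, b) y = 0 := hb.trans ((binIndex_eq_zero_iff hw).2 hbz)
    exact ⟨hbz.1, ((binIndex_eq_zero_iff hw).1 hby).2⟩
  · rintro ⟨hzb, hby⟩
    have hbz : b ∈ Set.Ioc (z - w) z := ⟨hzb, hby.trans hyz⟩
    have hby' : b ∈ Set.Ioc (y - w) y := ⟨by linarith, hby⟩
    exact ⟨((binIndex_eq_zero_iff hw).2 hby').trans ((binIndex_eq_zero_iff hw).2 hbz).symm, hbz⟩

lemma volume_setOf_binIndex_eq_inter_Ioc (hw : 0 < w) (y z c : ℝ) :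
    volume ({b | binIndex (w, b) y = binIndex (w, b) z} ∩ Set.Ioc c (c + w))
      = ENNReal.ofReal (w - |y - z|) := by
  wlog hyz : y ≤ z generalizing y z
  · simpa only [eq_comm, abs_sub_comm] using this z y (le_of_not_ge hyz)
  have hS : MeasurableSet {b | binIndex (w, b) y = binIndex (w, b) z} :=
    measurable_prodMk_left (measurableSet_binIndex_eq y z)
  rw [measure_inter_Ioc_eq_of_periodic hw hS (periodic_binIndex_eq hw.ne' y z) c (z - w),
    sub_add_cancel, setOf_binIndex_eq_inter_Ioc hw hyz, Real.volume_Ioc, abs_sub_comm,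
    abs_of_nonneg (sub_nonneg.2 hyz)]
  congr 1
  ring

end Bins

section GridLaw

/-- The conditional law of the offset given the spacing `w`: uniform on `(0, w)`, and the zero
measure if `w ≤ 0`. -/
noncomputable def uniformOffset : Kernel ℝ ℝ where
  toFun w := volume[|Set.Ioo 0 w]
  measurable' := by
    refine Measure.measurable_of_measurable_coe _ fun A hA => ?_
    have hset : MeasurableSet {p : ℝ × ℝ | p.2 ∈ Set.Ioo 0 p.1 ∩ A} :=
      ((measurableSet_lt measurable_const measurable_snd).inter
        (measurableSet_lt measurable_snd measurable_fst)).inter (measurable_snd hA)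
    simp only [cond_apply measurableSet_Ioo, Real.volume_Ioo, sub_zero]
    exact (ENNReal.measurable_ofReal.inv).mul (measurable_measure_prodMk_left hset)

lemma uniformOffset_apply (w : ℝ) (A : Set ℝ) :
    uniformOffset w A = (ENNReal.ofReal w)⁻¹ * volume (Set.Ioo 0 w ∩ A) := by
  change volume[|Set.Ioo 0 w] A = _
  rw [cond_apply measurableSet_Ioo, Real.volume_Ioo, sub_zero]

instance : IsFiniteKernel uniformOffset :=
  ⟨1, ENNReal.one_lt_top, fun w => prob_le_one (μ := volume[|Set.Ioo 0 w])⟩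

/-- The law of a random grid `(w, b)`: the spacing `w > 0` is drawn from `μ` and, given `w`, the
offset `b` is uniform on `(0, w)`. -/
noncomputable def gridLaw (μ : Measure ℝ) : Measure (ℝ × ℝ) :=
  μ.restrict (Set.Ioi 0) ⊗ₘ uniformOffset

/-- The Polya kernel `k_μ` as a function of the signed distance `r`. -/
noncomputable def polyaKernel (μ : Measure ℝ) (r : ℝ) : ℝ :=
  ∫ x in Set.Ioi (0 : ℝ), max 0 (1 - |r| / x) ∂μ

lemma uniformOffset_setOf_binIndex_eq {w : ℝ} (hw : 0 < w) (y z : ℝ) :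
    uniformOffset w {b | binIndex (w, b) y = binIndex (w, b) z}
      = ENNReal.ofReal (max 0 (1 - |y - z| / w)) := by
  set S := {b | binIndex (w, b) y = binIndex (w, b) z}
  have hvol : volume (Set.Ioo 0 w ∩ S) = ENNReal.ofReal (w - |y - z|) := by
    have hIoo : (Set.Ioo 0 w ∩ S : Set ℝ) =ᵐ[volume] (S ∩ Set.Ioc 0 (0 + w) : Set ℝ) := by
      rw [Set.inter_comm, zero_add]
      exact (ae_eq_refl S).inter Ioo_ae_eq_Ioc
    rw [measure_congr hIoo, volume_setOf_binIndex_eq_inter_Ioc hw]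
  calc uniformOffset w S
    _ = ENNReal.ofReal (w⁻¹ * (w - |y - z|)) := by
      rw [uniformOffset_apply, hvol, ← ENNReal.ofReal_inv_of_pos hw,
        ← ENNReal.ofReal_mul (inv_nonneg.2 hw.le)]
    _ = ENNReal.ofReal (1 - |y - z| / w) := by
      rw [mul_sub, inv_mul_cancel₀ hw.ne', ← div_eq_inv_mul]
    _ = ENNReal.ofReal (max 0 (1 - |y - z| / w)) := by simp [ENNReal.ofReal_max]

variable {μ : Measure ℝ}

lemma polyaKernel_nonneg (r : ℝ) : 0 ≤ polyaKernel μ r :=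
  integral_nonneg fun _ => le_max_left _ _

lemma integrable_max_zero_one_sub_div [IsFiniteMeasure μ] (r : ℝ) :
    IntegrableOn (fun x => max 0 (1 - |r| / x)) (Set.Ioi 0) μ := by
  refine Integrable.of_bound (C := 1) (by fun_prop) ?_
  filter_upwards [ae_restrict_mem measurableSet_Ioi] with x hx
  have hrx : 0 ≤ |r| / x := div_nonneg (abs_nonneg r) (Set.mem_Ioi.1 hx).le
  rw [Real.norm_of_nonneg (le_max_left _ _)]
  exact max_le zero_le_one (sub_le_self 1 hrx)

lemma gridLaw_apply [SFinite μ] {A : Set (ℝ × ℝ)} (hA : MeasurableSet A) :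
    gridLaw μ A
      = ∫⁻ w in Set.Ioi 0, (ENNReal.ofReal w)⁻¹ * volume (Set.Ioo 0 w ∩ Prod.mk w ⁻¹' A) ∂μ := by
  simp_rw [gridLaw, Measure.compProd_apply hA, uniformOffset_apply]

lemma gridLaw_setOf_binIndex_eq [IsFiniteMeasure μ] (y z : ℝ) :
    gridLaw μ {g | binIndex g y = binIndex g z} = ENNReal.ofReal (polyaKernel μ (y - z)) := by
  rw [gridLaw, Measure.compProd_apply (measurableSet_binIndex_eq y z), polyaKernel,
    ofReal_integral_eq_lintegral_ofReal (integrable_max_zero_one_sub_div _)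
      (.of_forall fun _ => le_max_left _ _)]
  exact setLIntegral_congr_fun measurableSet_Ioi fun w hw => uniformOffset_setOf_binIndex_eq hw y z

end GridLaw

section BinningKernel

/-- The random binning kernel `K̃` of the grid `g`: the indicator of `y` and `z` sharing a bin. -/
noncomputable def binningKernel (g : ℝ × ℝ) (y z : ℝ) : ℝ :=
  if binIndex g y = binIndex g z then 1 else 0

lemma measurable_binningKernel (y z : ℝ) : Measurable fun g => binningKernel g y z :=
  .ite (measurableSet_binIndex_eq y z) measurable_const measurable_const

lemma isIdempotentElem_binningKernel (g : ℝ × ℝ) (y z : ℝ) :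
    IsIdempotentElem (binningKernel g y z) := by
  simp [IsIdempotentElem, binningKernel]

variable {Ω : Type*} [MeasurableSpace Ω] {P : Measure Ω} {μ : Measure ℝ} [IsFiniteMeasure μ]
  {G : Ω → ℝ × ℝ}

lemma integral_binningKernel (hG : HasLaw G (gridLaw μ) P) (y z : ℝ) :
    ∫ ω, binningKernel (G ω) y z ∂P = polyaKernel μ (y - z) := by
  have hind : (fun g => binningKernel g y z)
      = Set.indicator {g | binIndex g y = binIndex g z} 1 := by
    ext g
    simp [binningKernel, Set.indicator_apply]
  calc ∫ ω, binningKernel (G ω) y z ∂P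
    _ = ∫ g, binningKernel g y z ∂gridLaw μ :=
      hG.integral_comp (measurable_binningKernel y z).aestronglyMeasurable
    _ = (gridLaw μ).real {g | binIndex g y = binIndex g z} := by
      rw [hind, integral_indicator_one (measurableSet_binIndex_eq y z)]
    _ = polyaKernel μ (y - z) := by
      rw [measureReal_def, gridLaw_setOf_binIndex_eq, ENNReal.toReal_ofReal (polyaKernel_nonneg _)]

lemma memLp_binningKernel [IsFiniteMeasure P] (hG : AEMeasurable G P) (y z : ℝ) (p : ENNReal) :
    MemLp (fun ω => binningKernel (G ω) y z) p P :=
  memLp_of_isIdempotentElem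
    ((measurable_binningKernel y z).comp_aemeasurable hG).aestronglyMeasurable
    (funext fun ω => isIdempotentElem_binningKernel (G ω) y z) p

lemma variance_binningKernel [IsProbabilityMeasure P] (hG : HasLaw G (gridLaw μ) P) (y z : ℝ) :
    Var[fun ω => binningKernel (G ω) y z; P]
      = polyaKernel μ (y - z) - polyaKernel μ (y - z) ^ 2 := by
  rw [variance_of_isIdempotentElem (memLp_binningKernel hG.aemeasurable y z 2).aestronglyMeasurable
    (funext fun ω => isIdempotentElem_binningKernel (G ω) y z), integral_binningKernel hG]

variable {κ : Type*} [Fintype κ] {grid : κ → Ω → ℝ × ℝ}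

lemma integral_sampleMean_binningKernel [Nonempty κ] [IsFiniteMeasure P]
    (hgrid : ∀ l, HasLaw (grid l) (gridLaw μ) P) (y z : ℝ) :
    ∫ ω, (Fintype.card κ : ℝ)⁻¹ * ∑ l, binningKernel (grid l ω) y z ∂P = polyaKernel μ (y - z) :=
  integral_sampleMean
    (fun l => memLp_one_iff_integrable.1 (memLp_binningKernel (hgrid l).aemeasurable y z 1))
    fun l => integral_binningKernel (hgrid l) y z

lemma integrable_sq_sampleMean_binningKernel_sub [IsFiniteMeasure P]
    (hgrid : ∀ l, AEMeasurable (grid l) P) (y z c : ℝ) :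
    Integrable
      (fun ω => ((Fintype.card κ : ℝ)⁻¹ * ∑ l, binningKernel (grid l ω) y z - c) ^ 2) P := by
  have hsum := memLp_finsetSum Finset.univ fun l _ => memLp_binningKernel (hgrid l) y z 2
  exact ((hsum.const_mul _).sub (memLp_const c)).integrable_sq

lemma integral_sq_sampleMean_binningKernel_sub [Nonempty κ] [IsProbabilityMeasure P]
    (hgrid : ∀ l, HasLaw (grid l) (gridLaw μ) P)
    (hindep : Pairwise fun l l' => grid l ⟂ᵢ[P] grid l') (y z : ℝ) :
    ∫ ω, ((Fintype.card κ : ℝ)⁻¹ * ∑ l, binningKernel (grid l ω) y z - polyaKernel μ (y - z)) ^ 2 ∂P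
      = (Fintype.card κ : ℝ)⁻¹ * (polyaKernel μ (y - z) - polyaKernel μ (y - z) ^ 2) :=
  integral_sq_sampleMean_sub (fun l => memLp_binningKernel (hgrid l).aemeasurable y z 2)
    (fun _ _ hl =>
      (hindep hl).comp (measurable_binningKernel y z) (measurable_binningKernel y z))
    (fun l => integral_binningKernel (hgrid l) y z)
    fun l => variance_binningKernel (hgrid l) y z

end BinningKernel

theorem random_binning_unbiased_and_error_general
    {μ : Measure ℝ} [IsFiniteMeasure μ] {ι κ : Type*} [Fintype ι] [Fintype κ] [Nonempty κ]
    {Ω : Type*} [MeasurableSpace Ω] {P : Measure Ω} [IsProbabilityMeasure P]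
    (x : ι → ℝ) {grid : κ → Ω → ℝ × ℝ} (hgrid : ∀ l, HasLaw (grid l) (gridLaw μ) P)
    (hindep : Pairwise fun l l' => grid l ⟂ᵢ[P] grid l') :
    (∀ l i j, P {ω | binIndex (grid l ω) (x i) = binIndex (grid l ω) (x j)}
      = ENNReal.ofReal (polyaKernel μ (x i - x j))) ∧
    (∀ i j, ∫ ω, (Fintype.card κ : ℝ)⁻¹ * ∑ l, binningKernel (grid l ω) (x i) (x j) ∂P
      = polyaKernel μ (x i - x j)) ∧
    ∫ ω, ∑ i, ∑ j, ((Fintype.card κ : ℝ)⁻¹ * ∑ l, binningKernel (grid l ω) (x i) (x j)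
        - polyaKernel μ (x i - x j)) ^ 2 ∂P
      = (Fintype.card κ : ℝ)⁻¹ * (∑ i, ∑ j, polyaKernel μ (x i - x j)
        - ∑ i, ∑ j, polyaKernel μ (x i - x j) ^ 2) := by
  refine ⟨fun l i j => ?_, fun i j => integral_sampleMean_binningKernel hgrid (x i) (x j), ?_⟩
  · rw [(hgrid l).measure_eq (measurableSet_binIndex_eq (x i) (x j)), gridLaw_setOf_binIndex_eq]
  · have hint (i j : ι) := integrable_sq_sampleMean_binningKernel_sub
      (fun l => (hgrid l).aemeasurable) (x i) (x j) (polyaKernel μ (x i - x j))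
    rw [integral_finsetSum _ fun i _ => integrable_finsetSum _ fun j _ => hint i j]
    simp_rw [integral_finsetSum _ fun j _ => hint _ j,
      integral_sq_sampleMean_binningKernel_sub hgrid hindep, ← Finset.mul_sum,
      Finset.sum_sub_distrib]

/-- Theorem 4.2: for the random binning feature map built on a probability measure `μ`
with positive support (Polya kernel `k_μ`), each entry of a single random binning kernel
matrix is Bernoulli with success probability `K i j = k_μ (x i - x j)`, the sample
average of `D` i.i.d. copies is unbiased, and its expected squared Frobenius-norm error
is `(1/D)(Σ_{ij} K_{ij} - Σ_{ij} K_{ij}²)`. -/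
theorem random_binning_unbiased_and_error
    (μ : Measure ℝ) [IsProbabilityMeasure μ] (hμ : μ (Set.Iic 0) = 0)
    (k : ℝ → ℝ)
    (hk : ∀ r : ℝ, k r = ∫ x in Set.Ioi (0 : ℝ), max 0 (1 - |r| / x) ∂μ)
    (n : ℕ) (x : Fin n → ℝ)
    (K : Fin n → Fin n → ℝ) (hK : ∀ i j, K i j = k (x i - x j))
    (D : ℕ) (hD : 0 < D)
    {Ω : Type*} [MeasurableSpace Ω] (P : Measure Ω) [IsProbabilityMeasure P]
    (wb : Fin D → Ω → ℝ × ℝ)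
    (hmeas : ∀ l, Measurable (wb l))
    (hindep : iIndepFun (m := fun _ : Fin D => (inferInstance : MeasurableSpace (ℝ × ℝ))) wb P)
    (hlaw : ∀ l, ∀ A : Set (ℝ × ℝ), MeasurableSet A →
      P.map (wb l) A
        = ∫⁻ w in Set.Ioi (0 : ℝ),
            (ENNReal.ofReal w)⁻¹
              * volume {b : ℝ | b ∈ Set.Ioo (0 : ℝ) w ∧ (w, b) ∈ A} ∂μ) :
    (∀ l, ∀ i j,
      P {ω | ⌊(x i - (wb l ω).2) / (wb l ω).1⌋ = ⌊(x j - (wb l ω).2) / (wb l ω).1⌋}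
        = ENNReal.ofReal (K i j)) ∧
    (∀ i j, (∫ ω, ((D : ℝ))⁻¹ *
        ∑ l : Fin D,
          (if ⌊(x i - (wb l ω).2) / (wb l ω).1⌋ = ⌊(x j - (wb l ω).2) / (wb l ω).1⌋
            then (1 : ℝ) else 0) ∂P)
      = K i j) ∧
    (∫ ω, ∑ i : Fin n, ∑ j : Fin n,
        (((D : ℝ))⁻¹ *
          (∑ l : Fin D,
            (if ⌊(x i - (wb l ω).2) / (wb l ω).1⌋ = ⌊(x j - (wb l ω).2) / (wb l ω).1⌋
              then (1 : ℝ) else 0))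
          - K i j) ^ 2 ∂P)
      = ((D : ℝ))⁻¹ * ((∑ i : Fin n, ∑ j : Fin n, K i j)
          - ∑ i : Fin n, ∑ j : Fin n, (K i j) ^ 2) := by
  obtain rfl : k = polyaKernel μ := funext hk
  obtain rfl : K = fun i j => polyaKernel μ (x i - x j) := funext₂ hK
  have : Nonempty (Fin D) := Fin.pos_iff_nonempty.1 hD
  have hwb (l : Fin D) : HasLaw (wb l) (gridLaw μ) P :=
    ⟨(hmeas l).aemeasurable, Measure.ext fun A hA => by rw [hlaw l A hA, gridLaw_apply hA]; rfl⟩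
  have h := random_binning_unbiased_and_error_general x hwb fun _ _ hlm => hindep.indepFun hlm
  rwa [Fintype.card_fin] at h
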